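/- arXiv:2308.16731 — 2 statements merged into one kernel-verified Lean document; each statement's English description precedes it below -/
import Mathlib

section
/- (Proposition 2.1, moment extension to product measures.) Let D ≥ 1, d ≥ 1, and for each i = 1, …, D let μ_i = (μ_{i,0}, …, μ_{i,2d}) ∈ ℝ^{2d+1} satisfy μ_{i,0} = 1, 𝓜_d(μ_i) is PSD, and 𝓜_{d−1}(μ_i; 1−x²) is PSD. Then there exist Borel probability measures ν_1, …, ν_D on ℝ, each with ν_i([-1,1]) = 1, such that the product measure ν = ν_1 ⊗ ⋯ ⊗ ν_D on ℝ^D satisfies ν([-1,1]^D) = 1 and ∫_{[-1,1]^D} x_1^{n_1} ⋯ x_D^{n_D} dν(x) = ∏_{i=1}^D μ_{i,n_i} for every multi-index n ∈ ℕ^D with 0 ≤ n_i ≤ d for all i. -/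
open MeasureTheory

/-- The degree-`d` moment matrix `𝓜_d(μ)` with entries `μ (m+n)`. -/
noncomputable def momentMatrix (d : ℕ) (μ : ℕ → ℝ) : Matrix (Fin (d+1)) (Fin (d+1)) ℝ :=
  fun m n => μ (m.1 + n.1)

/-- The localized moment matrix `𝓜_{d-1}(μ; 1 - x²)` with entries `μ (m+n) - μ (m+n+2)`. -/
noncomputable def locMomentMatrix (d : ℕ) (μ : ℕ → ℝ) : Matrix (Fin d) (Fin d) ℝ :=
  fun m n => μ (m.1 + n.1) - μ (m.1 + n.1 + 2)

/-- The hypercube `[-1,1]^D` in `ℝ^D`. -/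
def cube (D : ℕ) : Set (Fin D → ℝ) := Set.univ.pi fun _ => Set.Icc (-1) 1

/-!
Each coordinate is handled by a Gelfand–Naimark–Segal construction. Factor the moment matrix as a
Gram matrix `μ (m + n) = ⟪v m, v n⟫` of vectors `v 0, …, v d`. On the span `W` of
`v 0, …, v (d - 1)` multiplication by `x` is the shift `v m ↦ v (m + 1)`; positivity of the
localized moment matrix says that the shift is contractive (hence well defined), and the Hankel
structure of `μ` says that its compression `A` to `W` is symmetric. Since
`A ^ m (P (v 0)) = P (v m)` for `m ≤ d`, with `P` the orthogonal projection onto `W`, the spectral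
measure of `A` at `P (v 0)` lives on `[-1, 1]` and has moments `μ 0, …, μ (2 * d - 1)`.
-/

open scoped InnerProductSpace

section Gram

open scoped ComplexOrder

variable {𝕜 n : Type*} [RCLike 𝕜] [Fintype n]

open scoped MatrixOrder Matrix.Norms.L2Operator in
theorem exists_gram_eq_of_posSemidef {M : Matrix n n 𝕜} (hM : M.PosSemidef) :
    ∃ v : n → EuclideanSpace 𝕜 n, Matrix.gram 𝕜 v = M := by
  classical
  obtain ⟨B, rfl⟩ := CStarAlgebra.nonneg_iff_eq_star_mul_self.mp hM.nonneg
  exact ⟨fun j => WithLp.toLp 2 (B.col j),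
    Matrix.gram_eq_conjTranspose_mul (EuclideanSpace.basisFun n 𝕜) _⟩

theorem norm_sum_smul_le_of_posSemidef_gram_sub_gram {E F : Type*}
    [SeminormedAddCommGroup E] [InnerProductSpace 𝕜 E]
    [SeminormedAddCommGroup F] [InnerProductSpace 𝕜 F] {v : n → E} {u : n → F}
    (h : (Matrix.gram 𝕜 v - Matrix.gram 𝕜 u).PosSemidef) (c : n → 𝕜) :
    ‖∑ i, c i • u i‖ ≤ ‖∑ i, c i • v i‖ := by
  have hc := h.re_dotProduct_nonneg c
  rw [Matrix.sub_mulVec, dotProduct_sub, Matrix.star_dotProduct_gram_mulVec,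
    Matrix.star_dotProduct_gram_mulVec, map_sub, inner_self_eq_norm_sq, inner_self_eq_norm_sq,
    sub_nonneg] at hc
  exact (sq_le_sq₀ (norm_nonneg _) (norm_nonneg _)).mp hc

end Gram

section InnerProductSpace

variable {𝕜 E : Type*} [RCLike 𝕜] [NormedAddCommGroup E] [InnerProductSpace 𝕜 E]

section SpectralMeasure

variable [FiniteDimensional 𝕜 E] {A : E →ₗ[𝕜] E}

/-- The spectral measure of a symmetric operator `A` at a vector `w`: the measure on `ℝ` giving each
eigenvalue the squared norm of the component of `w` in its eigenspace. It is encoded as a sum of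
point masses over an orthonormal eigenbasis, so a multiple eigenvalue contributes several terms. -/
noncomputable def spectralMeasure (hA : A.IsSymmetric) (w : E) : Measure ℝ :=
  ∑ j, ‖⟪hA.eigenvectorBasis rfl j, w⟫_𝕜‖ₑ ^ 2 • Measure.dirac (hA.eigenvalues rfl j)

instance isFiniteMeasure_spectralMeasure (hA : A.IsSymmetric) (w : E) :
    IsFiniteMeasure (spectralMeasure hA w) :=
  ⟨by simp [spectralMeasure, Measure.finsetSum_apply, ENNReal.sum_lt_top]⟩

theorem abs_eigenvalues_le_of_norm_apply_le (hA : A.IsSymmetric) {C : ℝ}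
    (hC : ∀ x, ‖A x‖ ≤ C * ‖x‖) (j : Fin (Module.finrank 𝕜 E)) :
    |hA.eigenvalues rfl j| ≤ C := by
  simpa [hA.apply_eigenvectorBasis, norm_smul] using hC (hA.eigenvectorBasis rfl j)

theorem spectralMeasure_compl_Icc_eq_zero (hA : A.IsSymmetric) {C : ℝ}
    (hC : ∀ x, ‖A x‖ ≤ C * ‖x‖) (w : E) :
    spectralMeasure hA w (Set.Icc (-C) C)ᶜ = 0 := by
  have hmem j : hA.eigenvalues rfl j ∈ Set.Icc (-C) C :=
    abs_le.mp (abs_eigenvalues_le_of_norm_apply_le hA hC j)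
  simp [spectralMeasure, Measure.finsetSum_apply, -Set.mem_Icc, hmem]

theorem integral_spectralMeasure {G : Type*} [NormedAddCommGroup G] [NormedSpace ℝ G]
    [CompleteSpace G] (hA : A.IsSymmetric) (w : E) (f : ℝ → G) :
    ∫ x, f x ∂(spectralMeasure hA w) =
      ∑ j, ‖⟪hA.eigenvectorBasis rfl j, w⟫_𝕜‖ ^ 2 • f (hA.eigenvalues rfl j) := by
  rw [spectralMeasure, integral_finsetSum_measure fun j _ =>
    (integrable_dirac (by simp [enorm_lt_top])).smul_measure (by simp)]
  simp [integral_smul_measure, integral_dirac]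

theorem pow_apply_eigenvectorBasis (hA : A.IsSymmetric) (k : ℕ)
    (j : Fin (Module.finrank 𝕜 E)) :
    (A ^ k) (hA.eigenvectorBasis rfl j) =
      ((hA.eigenvalues rfl j ^ k : ℝ) : 𝕜) • hA.eigenvectorBasis rfl j := by
  induction k with
  | zero => simp
  | succ k ih =>
    rw [pow_succ', Module.End.mul_apply, ih, map_smul, hA.apply_eigenvectorBasis, smul_smul,
      ← RCLike.ofReal_mul, pow_succ]

theorem integral_pow_spectralMeasure (hA : A.IsSymmetric) (w : E) (k : ℕ) :
    ((∫ x, x ^ k ∂(spectralMeasure hA w) : ℝ) : 𝕜) = ⟪w, (A ^ k) w⟫_𝕜 := by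
  rw [integral_spectralMeasure, ← (hA.eigenvectorBasis rfl).sum_inner_mul_inner,
    RCLike.ofReal_sum]
  refine Finset.sum_congr rfl fun j _ => ?_
  rw [← hA.pow k, pow_apply_eigenvectorBasis, inner_smul_left, RCLike.conj_ofReal,
    mul_left_comm, ← inner_conj_symm w, RCLike.conj_mul, smul_eq_mul, mul_comm, RCLike.ofReal_mul,
    RCLike.ofReal_pow (‖_‖)]

end SpectralMeasure

section Compression

theorem exists_linearMap_range_of_norm_le {R M : Type*} [Ring R] [AddCommGroup M] [Module R M]
    {G H : Type*} [SeminormedAddCommGroup G] [Module R G] [NormedAddCommGroup H] [Module R H]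
    {S : M →ₗ[R] G} {T : M →ₗ[R] H} (hTS : ∀ c, ‖T c‖ ≤ ‖S c‖) :
    ∃ B : LinearMap.range S →ₗ[R] H,
      (∀ c, B (S.rangeRestrict c) = T c) ∧ ∀ x, ‖B x‖ ≤ ‖x‖ := by
  have hker : LinearMap.ker S ≤ LinearMap.ker T := fun c hc => by
    simpa [LinearMap.mem_ker.mp hc] using hTS c
  let B := (LinearMap.ker S).liftQ T hker ∘ₗ S.quotKerEquivRange.symm.toLinearMap
  have hB c : B (S.rangeRestrict c) = T c :=
    congrArg ((LinearMap.ker S).liftQ T hker) (S.quotKerEquivRange_symm_apply_image c ⟨c, rfl⟩)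
  refine ⟨B, hB, fun x => ?_⟩
  obtain ⟨c, rfl⟩ := S.surjective_rangeRestrict x
  rw [hB]
  exact hTS c

theorem exists_isSymmetric_compression {M : Type*} [AddCommGroup M] [Module 𝕜 M]
    {S T : M →ₗ[𝕜] E} [(LinearMap.range S).HasOrthogonalProjection]
    (hTS : ∀ c, ‖T c‖ ≤ ‖S c‖) (hsymm : ∀ c c', ⟪T c, S c'⟫_𝕜 = ⟪S c, T c'⟫_𝕜) :
    ∃ A : LinearMap.range S →ₗ[𝕜] LinearMap.range S, A.IsSymmetric ∧ (∀ x, ‖A x‖ ≤ ‖x‖) ∧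
      ∀ c, A (S.rangeRestrict c) = (LinearMap.range S).orthogonalProjectionOnto (T c) := by
  obtain ⟨B, hBS, hB⟩ := exists_linearMap_range_of_norm_le hTS
  let P := (LinearMap.range S).orthogonalProjectionOnto
  refine ⟨P.toLinearMap ∘ₗ B, fun x y => ?_, fun x => ?_, fun c => congrArg P (hBS c)⟩
  · obtain ⟨c, rfl⟩ := S.surjective_rangeRestrict x
    obtain ⟨c', rfl⟩ := S.surjective_rangeRestrict y
    simpa [P, hBS] using hsymm c c'
  · exact ((LinearMap.range S).norm_orthogonalProjectionOnto_apply_le _).trans (hB x)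

theorem pow_apply_zero_eq_of_apply_castSucc_eq_succ {R M : Type*} [Semiring R] [AddCommMonoid M]
    [Module R M] {A : M →ₗ[R] M} {d : ℕ} {p : Fin (d + 1) → M}
    (hp : ∀ m : Fin d, A (p m.castSucc) = p m.succ) (n : Fin (d + 1)) :
    (A ^ (n : ℕ)) (p 0) = p n := by
  induction n using Fin.induction with
  | zero => simp
  | succ m ih =>
    rw [Fin.val_succ, pow_succ', Module.End.mul_apply, ← Fin.val_castSucc, ih, hp]

end Compression

open scoped ComplexOrder in
theorem exists_measure_integral_pow_eq_inner_of_shift {d : ℕ} {v : Fin (d + 1) → E}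
    (hcontr : (Matrix.gram 𝕜 (v ∘ Fin.castSucc) - Matrix.gram 𝕜 (v ∘ Fin.succ)).PosSemidef)
    (hsymm : ∀ m n : Fin d, ⟪v m.succ, v n.castSucc⟫_𝕜 = ⟪v m.castSucc, v n.succ⟫_𝕜) :
    ∃ ν : Measure ℝ, IsFiniteMeasure ν ∧ ν (Set.Icc (-1) 1)ᶜ = 0 ∧
      ∀ (m : Fin d) (n : Fin (d + 1)),
        ((∫ x, x ^ (m + n : ℕ) ∂ν : ℝ) : 𝕜) = ⟪v m.castSucc, v n⟫_𝕜 := by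
  let S := Fintype.linearCombination 𝕜 (v ∘ Fin.castSucc)
  let T := Fintype.linearCombination 𝕜 (v ∘ Fin.succ)
  have hTS c : ‖T c‖ ≤ ‖S c‖ := norm_sum_smul_le_of_posSemidef_gram_sub_gram hcontr c
  have hTSsymm c c' : ⟪T c, S c'⟫_𝕜 = ⟪S c, T c'⟫_𝕜 := by
    simp only [S, T, Fintype.linearCombination_apply, Function.comp_apply, sum_inner, inner_sum,
      inner_smul_left, inner_smul_right, hsymm]
  obtain ⟨A, hA, hA1, hAS⟩ := exists_isSymmetric_compression hTS hTSsymm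
  let P := (LinearMap.range S).orthogonalProjectionOnto
  have hS (m : Fin d) : S (Pi.single m 1) = v m.castSucc := by simp [S]
  have hT (m : Fin d) : T (Pi.single m 1) = v m.succ := by simp [T]
  have hP (m : Fin d) : P (v m.castSucc) = S.rangeRestrict (Pi.single m 1) := by
    rw [← hS]
    exact (LinearMap.range S).orthogonalProjectionOnto_mem_subspace_eq_self (S.rangeRestrict _)
  have hpow : ∀ n : Fin (d + 1), (A ^ (n : ℕ)) (P (v 0)) = P (v n) :=
    pow_apply_zero_eq_of_apply_castSucc_eq_succ (p := fun n => P (v n)) fun m => by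
      rw [hP, hAS, hT]
  refine ⟨spectralMeasure hA (P (v 0)), inferInstance,
    spectralMeasure_compl_Icc_eq_zero hA (by simpa using hA1) _, fun m n => ?_⟩
  calc ((∫ x, x ^ (m + n : ℕ) ∂(spectralMeasure hA (P (v 0))) : ℝ) : 𝕜)
      = ⟪(A ^ (m : ℕ)) (P (v 0)), (A ^ (n : ℕ)) (P (v 0))⟫_𝕜 := by
        rw [integral_pow_spectralMeasure, pow_add, Module.End.mul_apply, hA.pow]
    _ = ⟪P (v m.castSucc), P (v n)⟫_𝕜 := by rw [hpow n, ← hpow m.castSucc, Fin.val_castSucc]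
    _ = ⟪v m.castSucc, v n⟫_𝕜 := by
        rw [Submodule.inner_orthogonalProjectionOnto_eq_of_mem_left, hP,
          LinearMap.codRestrict_apply, hS]

end InnerProductSpace

theorem exists_measure_integral_pow_eq_of_posSemidef {d : ℕ} {μ : ℕ → ℝ}
    (hM : (momentMatrix d μ).PosSemidef) (hM' : (locMomentMatrix d μ).PosSemidef) :
    ∃ ν : Measure ℝ, IsFiniteMeasure ν ∧ ν (Set.Icc (-1) 1)ᶜ = 0 ∧
      ∀ k < 2 * d, ∫ x, x ^ k ∂ν = μ k := by
  obtain ⟨v, hv⟩ := exists_gram_eq_of_posSemidef hM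
  have hinner (m n : Fin (d + 1)) : ⟪v m, v n⟫_ℝ = μ (m + n) := congrFun₂ hv m n
  have hloc : locMomentMatrix d μ =
      Matrix.gram ℝ (v ∘ Fin.castSucc) - Matrix.gram ℝ (v ∘ Fin.succ) := by
    ext m n
    simp [locMomentMatrix, hinner, add_add_add_comm]
  obtain ⟨ν, hfin, hsupp, hmom⟩ := exists_measure_integral_pow_eq_inner_of_shift (hloc ▸ hM')
    fun m n => by simp [hinner, add_right_comm, add_assoc]
  refine ⟨ν, hfin, hsupp, fun k hk => ?_⟩
  obtain ⟨m, n, rfl⟩ : ∃ (m : Fin d) (n : Fin (d + 1)), k = m + n :=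
    ⟨⟨min k (d - 1), by lia⟩, ⟨k - min k (d - 1), by lia⟩, by simp⟩
  simpa [hinner] using hmom m n

theorem exists_probabilityMeasure_integral_pow_eq_of_posSemidef {d : ℕ} (hd : 1 ≤ d)
    {μ : ℕ → ℝ} (h0 : μ 0 = 1)
    (hM : (momentMatrix d μ).PosSemidef) (hM' : (locMomentMatrix d μ).PosSemidef) :
    ∃ ν : ProbabilityMeasure ℝ, (ν : Measure ℝ) (Set.Icc (-1) 1) = 1 ∧
      ∀ k < 2 * d, ∫ x in Set.Icc (-1) 1, x ^ k ∂(ν : Measure ℝ) = μ k := by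
  obtain ⟨ν, -, hsupp, hmom⟩ := exists_measure_integral_pow_eq_of_posSemidef hM hM'
  have hprob : IsProbabilityMeasure ν := by
    have hmass := hmom 0 (by lia)
    simp only [pow_zero, integral_const, smul_eq_mul, mul_one, h0] at hmass
    exact isProbabilityMeasure_iff_real.mpr hmass
  have hrestrict : ν.restrict (Set.Icc (-1) 1) = ν := Measure.restrict_eq_self_of_ae_mem hsupp
  refine ⟨⟨ν, hprob⟩, ?_, fun k hk => ?_⟩
  · exact (prob_compl_eq_zero_iff (μ := ν) measurableSet_Icc).mp hsupp
  · rw [ProbabilityMeasure.coe_mk, hrestrict, hmom k hk]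

theorem setIntegral_univ_pi_prod_eq_prod {𝕜 ι : Type*} [RCLike 𝕜] [Fintype ι]
    {X : ι → Type*} {mX : ∀ i, MeasurableSpace (X i)}
    (ν : ∀ i, Measure (X i)) [∀ i, SigmaFinite (ν i)]
    (s : ∀ i, Set (X i)) (f : ∀ i, X i → 𝕜) :
    ∫ x in Set.univ.pi s, ∏ i, f i (x i) ∂(Measure.pi ν) = ∏ i, ∫ x in s i, f i x ∂(ν i) := by
  rw [Measure.restrict_pi_pi, integral_fintype_prod_eq_prod]

theorem statement1_general {ι : Type*} [Fintype ι] {d : ι → ℕ} (hd : ∀ i, 1 ≤ d i)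
    {μ : ι → ℕ → ℝ} (h0 : ∀ i, μ i 0 = 1)
    (hM : ∀ i, (momentMatrix (d i) (μ i)).PosSemidef)
    (hM' : ∀ i, (locMomentMatrix (d i) (μ i)).PosSemidef) :
    ∃ ν : ι → ProbabilityMeasure ℝ,
      (∀ i, (ν i : Measure ℝ) (Set.Icc (-1) 1) = 1) ∧
      (Measure.pi fun i => (ν i : Measure ℝ)) (Set.univ.pi fun _ => Set.Icc (-1) 1) = 1 ∧
      ∀ n : ι → ℕ, (∀ i, n i < 2 * d i) →
        ∫ x in Set.univ.pi fun _ => Set.Icc (-1) 1, (∏ i, x i ^ n i)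
          ∂(Measure.pi fun i => (ν i : Measure ℝ)) = ∏ i, μ i (n i) := by
  choose ν hν hmom using fun i =>
    exists_probabilityMeasure_integral_pow_eq_of_posSemidef (hd i) (h0 i) (hM i) (hM' i)
  refine ⟨ν, hν, ?_, fun n hn => ?_⟩
  · rw [Measure.pi_pi, Finset.prod_eq_one fun i _ => hν i]
  · rw [setIntegral_univ_pi_prod_eq_prod _ _ fun i (x : ℝ) => x ^ n i]
    exact Finset.prod_congr rfl fun i _ => hmom i (n i) (hn i)

/-- Proposition 2.1 (moment extension to product measures): if for each `i` the vector
`μ_i` satisfies `μ_{i,0} = 1` and has PSD moment matrices `𝓜_d(μ_i)` and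
`𝓜_{d-1}(μ_i; 1-x²)`, then there are Borel probability measures `ν_i` on `ℝ`, each
with `ν_i [-1,1] = 1`, whose product `ν = ν_1 ⊗ ⋯ ⊗ ν_D` satisfies `ν([-1,1]^D) = 1`
and `∫_{[-1,1]^D} x^n dν = ∏ᵢ μ_{i,nᵢ}` for all multi-indices `n` with `nᵢ ≤ d`. -/
theorem statement1 (D d : ℕ) (hD : 1 ≤ D) (hd : 1 ≤ d)
    (μ : Fin D → ℕ → ℝ) (h0 : ∀ i, μ i 0 = 1)
    (hM : ∀ i, (momentMatrix d (μ i)).PosSemidef)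
    (hM' : ∀ i, (locMomentMatrix d (μ i)).PosSemidef) :
    ∃ ν : Fin D → ProbabilityMeasure ℝ,
      (∀ i, (ν i : Measure ℝ) (Set.Icc (-1 : ℝ) 1) = 1) ∧
      (Measure.pi fun i => (ν i : Measure ℝ)) (cube D) = 1 ∧
      ∀ n : Fin D → ℕ, (∀ i, n i ≤ d) →
        ∫ x in cube D, (∏ i, x i ^ n i) ∂(Measure.pi fun i => (ν i : Measure ℝ)) =
          ∏ i, μ i (n i) := by
  obtain ⟨ν, hν, hcube, hmom⟩ := statement1_general (fun _ => hd) h0 hM hM'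
  exact ⟨ν, hν, hcube, fun n hn => hmom n fun i => (hn i).trans_lt (by lia)⟩
end

section
/- (Theorem 2.2, equivalence of the reformulation.) Let p be a real polynomial in D variables of total degree at most d, written p(x) = Σ_{|n|≤d} p_n x^n, and let L ≥ 1. Define the objective f(μ) = Σ_{|n|≤d} p_n Σ_{l=1}^L ∏_{i=1}^D μ_{i,n_i}^{(l)} on the feasible set F_L. Then: (i) for every μ ∈ F_L one has f(μ) ≥ min_{x ∈ [-1,1]^D} p(x), and (ii) there exists μ* ∈ F_L with f(μ*) = min_{x ∈ [-1,1]^D} p(x). In other words, the reformulated problem and the problem of minimizing p over [-1,1]^D share the same global minimum value. -/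
open MeasureTheory

/-- The feasible set `F_L`: all the moment matrices `𝓜_d(μ_i^{(l)})` and
`𝓜_{d-1}(μ_i^{(l)}; 1-x²)` are PSD and `Σ_l ∏_i μ_{i,0}^{(l)} = 1`. -/
def Feasible (D d L : ℕ) (μ : Fin L → Fin D → ℕ → ℝ) : Prop :=
  (∀ l i, (momentMatrix d (μ l i)).PosSemidef) ∧
  (∀ l i, (locMomentMatrix d (μ l i)).PosSemidef) ∧
  (∑ l, ∏ i, μ l i 0) = 1

/-- The reformulated objective `f(μ) = Σ_n p_n Σ_l ∏_i μ_{i,n_i}^{(l)}`. -/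
noncomputable def objective (D L : ℕ) (p : MvPolynomial (Fin D) ℝ)
    (μ : Fin L → Fin D → ℕ → ℝ) : ℝ :=
  ∑ n ∈ p.support, p.coeff n * ∑ l, ∏ i, μ l i (n i)

/-- The global minimum value of `p` over the hypercube `[-1,1]^D`. -/
noncomputable def minVal (D : ℕ) (p : MvPolynomial (Fin D) ℝ) : ℝ :=
  sInf ((fun x => MvPolynomial.eval x p) '' cube D)

/-!
A sequence with positive semidefinite moment matrices defines a Riesz functional that is
nonnegative on every univariate polynomial of degree at most `2d` which is nonnegative on `[-1, 1]`.
This is the Markov–Lukács theorem: splitting off the factor belonging to a complex root, such a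
polynomial is a sum of weighted squares `(1 - X)^i (1 + X)^j r²` without any increase in degree, and
in even degree the weights can be reduced to `1` and `1 - X²`.

Positivity is inherited by tensor products, since the evaluations at the coordinates of a point of
the cube can be exchanged for the Riesz functionals one variable at a time. Applied to `p - min p`
this bounds the objective from below, and the moments of a Dirac measure at a minimizer attain the
bound.
-/

section MarkovLukacs

open Polynomial
open scoped NNReal

variable {q : ℝ[X]} {a : ℝ} {m n : ℕ}

/-- The cone generated by the squares weighted by products of the factors `1 - X` and `1 + X`,
truncated at degree `n`. -/
noncomputable def lukacsCone (n : ℕ) : Submodule ℝ≥0 ℝ[X] :=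
  Submodule.span ℝ≥0
    {p | ∃ i j r, i + j + 2 * r.natDegree ≤ n ∧ (1 - X) ^ i * (1 + X) ^ j * r ^ 2 = p}

theorem lukacsCone_mono : Monotone lukacsCone := by
  rintro m n hmn
  refine Submodule.span_mono ?_
  rintro _ ⟨i, j, r, hdeg, rfl⟩
  exact ⟨i, j, r, hdeg.trans hmn, rfl⟩

theorem weighted_sq_mem_lukacsCone {i j : ℕ} {r : ℝ[X]} (h : i + j + 2 * r.natDegree ≤ n) :
    (1 - X) ^ i * (1 + X) ^ j * r ^ 2 ∈ lukacsCone n :=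
  Submodule.subset_span ⟨i, j, r, h, rfl⟩

theorem C_mem_lukacsCone (n : ℕ) {c : ℝ} (hc : 0 ≤ c) : C c ∈ lukacsCone n := by
  have h := weighted_sq_mem_lukacsCone (n := n) (i := 0) (j := 0) (r := C √c) (by simp)
  rwa [pow_zero, pow_zero, one_mul, one_mul, ← C_pow, Real.sq_sqrt hc] at h

theorem mul_mem_lukacsCone {p q : ℝ[X]} (hp : p ∈ lukacsCone m) (hq : q ∈ lukacsCone n) :
    p * q ∈ lukacsCone (m + n) := by
  refine (?_ : lukacsCone m * lukacsCone n ≤ lukacsCone (m + n)) (Submodule.mul_mem_mul hp hq)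
  rw [lukacsCone, lukacsCone, Submodule.span_mul_span, Submodule.span_le]
  rintro _ ⟨_, ⟨i, j, r, hr, rfl⟩, _, ⟨k, l, s, hs, rfl⟩, rfl⟩
  rw [SetLike.mem_coe]
  have hrs : (r * s).natDegree ≤ r.natDegree + s.natDegree := natDegree_mul_le
  have hprod : (1 - X) ^ (i + k) * (1 + X) ^ (j + l) * (r * s) ^ 2 ∈ lukacsCone (m + n) :=
    weighted_sq_mem_lukacsCone (by lia)
  convert hprod using 1
  ring

theorem eval_nonneg_of_mem_lukacsCone (hq : q ∈ lukacsCone n) :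
    ∀ t ∈ Set.Icc (-1 : ℝ) 1, 0 ≤ q.eval t := by
  intro t ht
  induction hq using Submodule.span_induction with
  | mem _ h =>
    obtain ⟨i, j, r, -, rfl⟩ := h
    have h₁ : 0 ≤ 1 - t := sub_nonneg.2 ht.2
    have h₂ : 0 ≤ 1 + t := by linarith [ht.1]
    simp only [eval_mul, eval_pow, eval_sub, eval_add, eval_one, eval_X]
    positivity
  | zero => simp
  | add p q _ _ hp hq => simpa using add_nonneg hp hq
  | smul c p _ hp => simpa [NNReal.smul_def] using mul_nonneg c.2 hp

theorem X_sub_C_mem_lukacsCone (ha : a ≤ -1) : X - C a ∈ lukacsCone 1 := by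
  have hX : (1 + X : ℝ[X]) ∈ lukacsCone 1 := by
    simpa using weighted_sq_mem_lukacsCone (n := 1) (i := 0) (j := 1) (r := 1) (by simp)
  convert add_mem hX (C_mem_lukacsCone 1 (sub_nonneg.2 ha)) using 1
  rw [C_sub, C_neg, C_1]
  ring

theorem C_sub_X_mem_lukacsCone (ha : 1 ≤ a) : C a - X ∈ lukacsCone 1 := by
  have hX : (1 - X : ℝ[X]) ∈ lukacsCone 1 := by
    simpa using weighted_sq_mem_lukacsCone (n := 1) (i := 1) (j := 0) (r := 1) (by simp)
  convert add_mem hX (C_mem_lukacsCone 1 (sub_nonneg.2 ha)) using 1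
  rw [C_sub, C_1]
  ring

theorem X_sub_C_sq_mem_lukacsCone (a : ℝ) : (X - C a) ^ 2 ∈ lukacsCone 2 := by
  simpa using weighted_sq_mem_lukacsCone (n := 2) (i := 0) (j := 0) (r := X - C a) (by simp)

theorem eval_nonneg_of_mul_nonneg {f g : ℝ[X]} {s : Set ℝ} (hs : s ⊆ closure (interior s))
    (hf₀ : f ≠ 0) (hf : ∀ t ∈ s, 0 ≤ f.eval t) (hfg : ∀ t ∈ s, 0 ≤ (f * g).eval t) :
    ∀ t ∈ s, 0 ≤ g.eval t := by
  have hdense : Dense {t | f.IsRoot t}ᶜ :=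
    (finite_setOfPred_isRoot hf₀).countable.dense_compl ℝ
  have hoff : interior s ∩ {t | f.IsRoot t}ᶜ ⊆ {t | 0 ≤ g.eval t} := by
    rintro t ⟨ht, hroot⟩
    have hts := interior_subset ht
    have hmul := hfg t hts
    rw [eval_mul] at hmul
    exact nonneg_of_mul_nonneg_right hmul ((hf t hts).lt_of_ne' hroot)
  have hclosed : IsClosed {t | 0 ≤ g.eval t} := isClosed_le continuous_const g.continuous
  exact hs.trans <| closure_minimal
    ((hdense.open_subset_closure_inter isOpen_interior).trans (closure_minimal hoff hclosed))
    hclosed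

theorem X_sub_C_sq_dvd_of_isLocalMin (hroot : q.IsRoot a) (hmin : IsLocalMin q.eval a) :
    (X - C a) ^ 2 ∣ q := by
  obtain ⟨r, rfl⟩ := dvd_iff_isRoot.2 hroot
  have hderiv : (derivative ((X - C a) * r)).eval a = 0 := by
    rw [← Polynomial.deriv]
    exact hmin.deriv_eq_zero
  have hr : r.IsRoot a := by simpa [derivative_mul] using hderiv
  rw [pow_two]
  exact mul_dvd_mul_left _ (dvd_iff_isRoot.2 hr)

theorem exists_mem_lukacsCone_dvd_of_isRoot (hq : ∀ t ∈ Set.Icc (-1 : ℝ) 1, 0 ≤ q.eval t)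
    (hroot : q.IsRoot a) : ∃ f ∈ lukacsCone f.natDegree, 0 < f.natDegree ∧ f ∣ q := by
  have hdvd : X - C a ∣ q := dvd_iff_isRoot.2 hroot
  rcases le_or_gt a (-1) with hle | hgt
  · exact ⟨X - C a, by simpa using X_sub_C_mem_lukacsCone hle, by simp, hdvd⟩
  rcases le_or_gt 1 a with hge | hlt
  · have hdeg : (C a - X).natDegree = 1 := by rw [← natDegree_neg, neg_sub, natDegree_X_sub_C]
    refine ⟨C a - X, hdeg ▸ C_sub_X_mem_lukacsCone hge, by lia, ?_⟩
    rwa [← neg_sub, neg_dvd]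
  · have hmin : IsLocalMin q.eval a := by
      filter_upwards [Icc_mem_nhds hgt hlt] with t ht
      rw [hroot.eq_zero]
      exact hq t ht
    refine ⟨(X - C a) ^ 2, ?_, by simp, X_sub_C_sq_dvd_of_isLocalMin hroot hmin⟩
    simpa using X_sub_C_sq_mem_lukacsCone a

theorem exists_mem_lukacsCone_dvd (hdeg : 0 < q.natDegree)
    (hq : ∀ t ∈ Set.Icc (-1 : ℝ) 1, 0 ≤ q.eval t) :
    ∃ f ∈ lukacsCone f.natDegree, 0 < f.natDegree ∧ f ∣ q := by
  obtain ⟨z, hz⟩ := IsAlgClosed.exists_aeval_eq_zero ℂ q (natDegree_pos_iff_degree_pos.1 hdeg).ne'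
  by_cases him : z.im = 0
  · have hroot : q.IsRoot z.re := by
      have hre : z = algebraMap ℝ ℂ z.re := Complex.ext (by simp) (by simp [him])
      rw [hre, aeval_algebraMap_apply, map_eq_zero] at hz
      simpa using hz
    exact exists_mem_lukacsCone_dvd_of_isRoot hq hroot
  · have hfactor : (X ^ 2 - C (2 * z.re) * X + C (‖z‖ ^ 2) : ℝ[X]) =
        (X - C z.re) ^ 2 + C (z.im ^ 2) := by
      rw [Complex.sq_norm, Complex.normSq_apply]
      simp only [C_mul, C_add, C_pow, C_ofNat]
      ring
    have hdeg₂ : ((X - C z.re) ^ 2 + C (z.im ^ 2)).natDegree = 2 := by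
      rw [natDegree_add_C, natDegree_pow, natDegree_X_sub_C]
    refine ⟨(X - C z.re) ^ 2 + C (z.im ^ 2), ?_, by lia, ?_⟩
    · rw [hdeg₂]
      exact add_mem (X_sub_C_sq_mem_lukacsCone _) (C_mem_lukacsCone 2 (sq_nonneg _))
    · rw [← hfactor]
      exact q.quadratic_dvd_of_aeval_eq_zero_im_ne_zero hz him

theorem mem_lukacsCone_of_nonneg (hq : ∀ t ∈ Set.Icc (-1 : ℝ) 1, 0 ≤ q.eval t) :
    q ∈ lukacsCone q.natDegree := by
  induction hn : q.natDegree using Nat.strong_induction_on generalizing q with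
  | _ n ih =>
    rcases Nat.eq_zero_or_pos q.natDegree with hzero | hpos
    · rw [eq_C_of_natDegree_eq_zero hzero] at hq ⊢
      exact C_mem_lukacsCone n (by simpa using hq 0 (by simp))
    obtain ⟨f, hf, hfpos, g, rfl⟩ := exists_mem_lukacsCone_dvd hpos hq
    have hfg : f * g ≠ 0 := ne_zero_of_natDegree_gt hpos
    have hdeg := natDegree_mul (left_ne_zero_of_mul hfg) (right_ne_zero_of_mul hfg)
    have hg : ∀ t ∈ Set.Icc (-1 : ℝ) 1, 0 ≤ g.eval t := by
      refine eval_nonneg_of_mul_nonneg ?_ (left_ne_zero_of_mul hfg)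
        (eval_nonneg_of_mem_lukacsCone hf) hq
      rw [interior_Icc, closure_Ioo (by norm_num)]
    rw [← hn, hdeg]
    exact mul_mem_lukacsCone hf (ih _ (by lia) hg rfl)

/-- The quadratic module of `1 - X²` on `[-1, 1]`, with both kinds of terms truncated at
degree `2 * k`. -/
noncomputable def truncatedQuadraticModule (k : ℕ) : Submodule ℝ≥0 ℝ[X] :=
  Submodule.span ℝ≥0
    ({p | ∃ r, r.natDegree ≤ k ∧ r ^ 2 = p} ∪ {p | ∃ r, r.natDegree < k ∧ (1 - X ^ 2) * r ^ 2 = p})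

variable {k : ℕ} {r : ℝ[X]}

theorem sq_mem_truncatedQuadraticModule (hr : r.natDegree ≤ k) :
    r ^ 2 ∈ truncatedQuadraticModule k :=
  Submodule.subset_span (.inl ⟨r, hr, rfl⟩)

theorem one_sub_X_sq_mul_sq_mem_truncatedQuadraticModule (hr : r.natDegree < k) :
    (1 - X ^ 2) * r ^ 2 ∈ truncatedQuadraticModule k :=
  Submodule.subset_span (.inr ⟨r, hr, rfl⟩)

theorem one_sub_X_mul_sq_mem_truncatedQuadraticModule (hr : r.natDegree < k) :
    (1 - X) * r ^ 2 ∈ truncatedQuadraticModule k := by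
  have hdeg : ((1 - X) * r).natDegree ≤ k :=
    (natDegree_mul_le_of_le (m := 1) (by compute_degree) le_rfl).trans (by lia)
  -- `2 * (1 - X) = (1 - X) ^ 2 + (1 - X ^ 2)`
  rw [← Submodule.smul_mem_iff _ (two_ne_zero : (2 : ℝ≥0) ≠ 0), two_smul]
  convert add_mem (sq_mem_truncatedQuadraticModule hdeg)
    (one_sub_X_sq_mul_sq_mem_truncatedQuadraticModule hr) using 1
  ring

theorem one_add_X_mul_sq_mem_truncatedQuadraticModule (hr : r.natDegree < k) :
    (1 + X) * r ^ 2 ∈ truncatedQuadraticModule k := by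
  have hdeg : ((1 + X) * r).natDegree ≤ k :=
    (natDegree_mul_le_of_le (m := 1) (by compute_degree) le_rfl).trans (by lia)
  rw [← Submodule.smul_mem_iff _ (two_ne_zero : (2 : ℝ≥0) ≠ 0), two_smul]
  convert add_mem (sq_mem_truncatedQuadraticModule hdeg)
    (one_sub_X_sq_mul_sq_mem_truncatedQuadraticModule hr) using 1
  ring

theorem lukacsCone_two_mul_le_truncatedQuadraticModule (k : ℕ) :
    lukacsCone (2 * k) ≤ truncatedQuadraticModule k := by
  rw [lukacsCone, Submodule.span_le]
  rintro _ ⟨a, b, r, hdeg, rfl⟩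
  rw [SetLike.mem_coe]
  obtain ⟨i, rfl | rfl⟩ := Nat.even_or_odd' a <;> obtain ⟨j, rfl | rfl⟩ := Nat.even_or_odd' b
  all_goals
    set s : ℝ[X] := (1 - X) ^ i * (1 + X) ^ j * r with hs
    have hsdeg : s.natDegree ≤ i + j + r.natDegree := by
      rw [hs]
      compute_degree
  · convert sq_mem_truncatedQuadraticModule (r := s) (k := k) (by lia) using 1
    rw [hs]
    ring
  · convert one_add_X_mul_sq_mem_truncatedQuadraticModule (r := s) (k := k) (by lia) using 1
    rw [hs]
    ring
  · convert one_sub_X_mul_sq_mem_truncatedQuadraticModule (r := s) (k := k) (by lia) using 1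
    rw [hs]
    ring
  · convert one_sub_X_sq_mul_sq_mem_truncatedQuadraticModule (r := s) (k := k) (by lia) using 1
    rw [hs]
    ring

theorem mem_truncatedQuadraticModule_of_nonneg (hdeg : q.natDegree ≤ 2 * k)
    (hq : ∀ t ∈ Set.Icc (-1 : ℝ) 1, 0 ≤ q.eval t) : q ∈ truncatedQuadraticModule k :=
  lukacsCone_two_mul_le_truncatedQuadraticModule k
    (lukacsCone_mono hdeg (mem_lukacsCone_of_nonneg hq))

end MarkovLukacs

section RieszFunctional

open Polynomial

variable (ν : ℕ → ℝ)

/-- The Riesz functional of a sequence: the linear functional on polynomials whose moments are the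
terms of the sequence. -/
noncomputable def rieszFunctional : ℝ[X] →ₗ[ℝ] ℝ :=
  (Polynomial.basisMonomials ℝ).constr ℝ ν

theorem rieszFunctional_X_pow (n : ℕ) : rieszFunctional ν (X ^ n) = ν n := by
  rw [X_pow_eq_monomial, rieszFunctional]
  simpa using (Polynomial.basisMonomials ℝ).constr_basis ℝ ν n

theorem rieszFunctional_one : rieszFunctional ν 1 = ν 0 := by
  simpa using rieszFunctional_X_pow ν 0

theorem rieszFunctional_one_sub_X_sq_mul (p : ℝ[X]) :
    rieszFunctional ν ((1 - X ^ 2) * p) = rieszFunctional (fun n => ν n - ν (n + 2)) p := by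
  induction p using Polynomial.induction_on' with
  | add p q hp hq => rw [mul_add, map_add, map_add, hp, hq]
  | monomial n a =>
    have hmul : ((1 - X ^ 2) * X ^ n : ℝ[X]) = X ^ n - X ^ (n + 2) := by ring
    rw [← smul_X_eq_monomial, mul_smul_comm, hmul]
    simp only [map_smul, map_sub, rieszFunctional_X_pow]

theorem rieszFunctional_sq {r : ℝ[X]} {k : ℕ} (hr : r.natDegree < k) :
    rieszFunctional ν (r ^ 2) =
      ∑ m : Fin k, ∑ n : Fin k, r.coeff m * (ν (m + n) * r.coeff n) := by
  have hsum : r = ∑ m : Fin k, r.coeff m • X ^ (m : ℕ) := by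
    rw [← Finset.sum_range fun m => r.coeff m • (X ^ m : ℝ[X])]
    simpa only [smul_eq_C_mul] using r.as_sum_range_C_mul_X_pow' hr
  conv_lhs => rw [pow_two, hsum, Finset.sum_mul_sum]
  simp only [map_sum, smul_mul_smul_comm, ← pow_add, map_smul, rieszFunctional_X_pow, smul_eq_mul]
  exact Finset.sum_congr rfl fun m _ => Finset.sum_congr rfl fun n _ => by ring

variable {ν}

theorem rieszFunctional_sq_nonneg {r : ℝ[X]} {k : ℕ} (hr : r.natDegree < k)
    (hν : (Matrix.of fun m n : Fin k => ν (m + n)).PosSemidef) : 0 ≤ rieszFunctional ν (r ^ 2) := by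
  rw [rieszFunctional_sq ν hr]
  simpa [dotProduct, Matrix.mulVec, Finset.mul_sum] using
    hν.dotProduct_mulVec_nonneg fun m => r.coeff m

theorem rieszFunctional_nonneg {d : ℕ} (hmom : (momentMatrix d ν).PosSemidef)
    (hloc : (locMomentMatrix d ν).PosSemidef) {q : ℝ[X]} (hdeg : q.natDegree ≤ 2 * d)
    (hq : ∀ t ∈ Set.Icc (-1 : ℝ) 1, 0 ≤ q.eval t) : 0 ≤ rieszFunctional ν q := by
  have hmem := mem_truncatedQuadraticModule_of_nonneg hdeg hq
  clear hdeg hq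
  induction hmem using Submodule.span_induction with
  | mem _ h =>
    rcases h with ⟨r, hr, rfl⟩ | ⟨r, hr, rfl⟩
    · exact rieszFunctional_sq_nonneg (Nat.lt_succ_of_le hr) hmom
    · rw [rieszFunctional_one_sub_X_sq_mul]
      exact rieszFunctional_sq_nonneg hr hloc
  | zero => simp
  | add p q _ _ hp hq => simpa using add_nonneg hp hq
  | smul c p _ hp => simpa [NNReal.smul_def] using mul_nonneg c.2 hp

end RieszFunctional

section ProductFunctional

open Polynomial

variable {σ : Type*} [Fintype σ]

/-- The tensor product of univariate linear functionals, as a functional on multivariate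
polynomials: the monomial `x ^ n` is sent to `∏ i, Λ i (X ^ n i)`. -/
noncomputable def productFunctional (Λ : σ → ℝ[X] →ₗ[ℝ] ℝ) : MvPolynomial σ ℝ →ₗ[ℝ] ℝ :=
  (MvPolynomial.basisMonomials σ ℝ).constr ℝ fun n => ∏ i, Λ i (X ^ n i)

theorem productFunctional_apply (Λ : σ → ℝ[X] →ₗ[ℝ] ℝ) (p : MvPolynomial σ ℝ) :
    productFunctional Λ p = ∑ n ∈ p.support, p.coeff n * ∏ i, Λ i (X ^ n i) :=
  (MvPolynomial.basisMonomials σ ℝ).constr_apply ℝ _ p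

theorem productFunctional_C (Λ : σ → ℝ[X] →ₗ[ℝ] ℝ) (c : ℝ) :
    productFunctional Λ (MvPolynomial.C c) = c * ∏ i, Λ i 1 := by
  rw [← mul_one c, MvPolynomial.C_mul, ← MvPolynomial.smul_eq_C_mul, map_smul, smul_eq_mul,
    productFunctional]
  congr 1
  · simp
  · simpa using (MvPolynomial.basisMonomials σ ℝ).constr_basis ℝ (fun n => ∏ i, Λ i (X ^ n i)) 0

theorem productFunctional_leval (x : σ → ℝ) (p : MvPolynomial σ ℝ) :
    productFunctional (fun i => leval (x i)) p = MvPolynomial.eval x p := by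
  simp [productFunctional_apply, MvPolynomial.eval_eq']

theorem exists_apply_eq_productFunctional_update [DecidableEq σ] (Λ : σ → ℝ[X] →ₗ[ℝ] ℝ) (a : σ)
    (p : MvPolynomial σ ℝ) : ∃ q : ℝ[X], q.natDegree ≤ p.degreeOf a ∧
      ∀ φ : ℝ[X] →ₗ[ℝ] ℝ, φ q = productFunctional (Function.update Λ a φ) p := by
  refine ⟨∑ n ∈ p.support, (p.coeff n * ∏ i ∈ {a}ᶜ, Λ i (X ^ n i)) • X ^ n a, ?_, fun φ => ?_⟩
  · refine natDegree_sum_le_of_forall_le _ _ fun n hn => ?_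
    exact ((natDegree_smul_le _ _).trans (natDegree_X_pow_le _)).trans
      (MvPolynomial.degreeOf_le_iff.1 le_rfl n hn)
  · rw [productFunctional_apply, map_sum]
    refine Finset.sum_congr rfl fun n _ => ?_
    have hrest : ∏ i ∈ {a}ᶜ, Function.update Λ a φ i (X ^ n i) = ∏ i ∈ {a}ᶜ, Λ i (X ^ n i) :=
      Finset.prod_congr rfl fun i hi => by
        rw [Function.update_of_ne (by simpa using hi)]
    rw [map_smul, smul_eq_mul, Fintype.prod_eq_mul_prod_compl a, Function.update_self, hrest]
    ring

theorem productFunctional_nonneg {K : σ → Set ℝ} {p : MvPolynomial σ ℝ} {Λ : σ → ℝ[X] →ₗ[ℝ] ℝ}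
    (hΛ : ∀ i, ∀ q : ℝ[X], q.natDegree ≤ p.degreeOf i → (∀ t ∈ K i, 0 ≤ q.eval t) → 0 ≤ Λ i q)
    (hp : ∀ x ∈ Set.univ.pi K, 0 ≤ MvPolynomial.eval x p) : 0 ≤ productFunctional Λ p := by
  classical
  -- Exchange the evaluations at the coordinates of a point for the functionals `Λ i` one by one.
  suffices hmixed : ∀ s : Finset σ, ∀ Φ : σ → ℝ[X] →ₗ[ℝ] ℝ, (∀ i ∈ s, Φ i = Λ i) →
      (∀ i ∉ s, ∃ t ∈ K i, Φ i = leval t) → 0 ≤ productFunctional Φ p from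
    hmixed Finset.univ Λ (fun _ _ => rfl) (by simp)
  intro s
  induction s using Finset.induction_on with
  | empty =>
    intro Φ _ hΦ
    choose x hxK hx using fun i => hΦ i (Finset.notMem_empty i)
    rw [funext hx, productFunctional_leval]
    exact hp x fun i _ => hxK i
  | insert a s ha ih =>
    intro Φ hΦΛ hΦK
    obtain ⟨q, hqdeg, hq⟩ := exists_apply_eq_productFunctional_update Φ a p
    rw [← Function.update_eq_self a Φ, ← hq, hΦΛ a (Finset.mem_insert_self a s)]
    refine hΛ a q hqdeg fun t ht => ?_
    rw [← leval_apply, hq]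
    refine ih _ (fun i hi => ?_) fun i hi => ?_
    · rw [Function.update_of_ne (ne_of_mem_of_not_mem hi ha)]
      exact hΦΛ i (Finset.mem_insert_of_mem hi)
    · rcases eq_or_ne i a with rfl | hia
      · exact ⟨t, ht, Function.update_self ..⟩
      · rw [Function.update_of_ne hia]
        exact hΦK i (by simp [hia, hi])

end ProductFunctional

section Reformulation

variable {D d L : ℕ} {p : MvPolynomial (Fin D) ℝ}

theorem objective_eq_sum_productFunctional (p : MvPolynomial (Fin D) ℝ)
    (μ : Fin L → Fin D → ℕ → ℝ) :
    objective D L p μ = ∑ l, productFunctional (fun i => rieszFunctional (μ l i)) p := by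
  simp only [objective, productFunctional_apply, rieszFunctional_X_pow, Finset.mul_sum]
  exact Finset.sum_comm

theorem mul_prod_le_productFunctional {ν : Fin D → ℕ → ℝ}
    (hmom : ∀ i, (momentMatrix d (ν i)).PosSemidef)
    (hloc : ∀ i, (locMomentMatrix d (ν i)).PosSemidef) (hdeg : ∀ i, p.degreeOf i ≤ 2 * d) {c : ℝ}
    (hc : ∀ x ∈ cube D, c ≤ MvPolynomial.eval x p) :
    c * ∏ i, ν i 0 ≤ productFunctional (fun i => rieszFunctional (ν i)) p := by
  have hdeg' : ∀ i, (p - MvPolynomial.C c).degreeOf i ≤ 2 * d := fun i =>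
    (MvPolynomial.degreeOf_sub_le i _ _).trans (by simpa using hdeg i)
  have hnonneg : 0 ≤ productFunctional (fun i => rieszFunctional (ν i)) (p - MvPolynomial.C c) :=
    productFunctional_nonneg
      (fun i _ hq => rieszFunctional_nonneg (hmom i) (hloc i) (hq.trans (hdeg' i)))
      fun x hx => by simpa using hc x hx
  rwa [map_sub, productFunctional_C, sub_nonneg,
    Finset.prod_congr rfl fun i _ => rieszFunctional_one (ν i)] at hnonneg

theorem Feasible.le_objective {μ : Fin L → Fin D → ℕ → ℝ} (hμ : Feasible D d L μ)
    (hdeg : ∀ i, p.degreeOf i ≤ 2 * d) {c : ℝ} (hc : ∀ x ∈ cube D, c ≤ MvPolynomial.eval x p) :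
    c ≤ objective D L p μ := by
  obtain ⟨hmom, hloc, hsum⟩ := hμ
  calc c = ∑ l, c * ∏ i, μ l i 0 := by rw [← Finset.mul_sum, hsum, mul_one]
    _ ≤ ∑ l, productFunctional (fun i => rieszFunctional (μ l i)) p :=
        Finset.sum_le_sum fun l _ => mul_prod_le_productFunctional (hmom l) (hloc l) hdeg hc
    _ = objective D L p μ := (objective_eq_sum_productFunctional p μ).symm

theorem momentMatrix_pow_posSemidef (d : ℕ) (x : ℝ) : (momentMatrix d (x ^ ·)).PosSemidef := by
  convert Matrix.posSemidef_vecMulVec_self_star fun m : Fin (d + 1) => x ^ (m : ℕ)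
  ext m n
  simp [momentMatrix, Matrix.vecMulVec_apply, pow_add]

theorem locMomentMatrix_pow_posSemidef (d : ℕ) {x : ℝ} (hx : x ∈ Set.Icc (-1 : ℝ) 1) :
    (locMomentMatrix d (x ^ ·)).PosSemidef := by
  have hx' : 0 ≤ 1 - x ^ 2 := by nlinarith [hx.1, hx.2]
  convert (Matrix.posSemidef_vecMulVec_self_star fun m : Fin d => x ^ (m : ℕ)).smul hx'
  ext m n
  simp only [locMomentMatrix, Matrix.smul_apply, Matrix.vecMulVec_apply, star_trivial, smul_eq_mul]
  ring

theorem momentMatrix_zero (d : ℕ) : momentMatrix d 0 = 0 := rfl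

theorem locMomentMatrix_zero (d : ℕ) : locMomentMatrix d 0 = 0 := by
  ext m n
  simp [locMomentMatrix]

/-- The moments of the Dirac measure at `x`, placed in the slot `l₀`, all other slots being zero. -/
def diracMoments (l₀ : Fin L) (x : Fin D → ℝ) : Fin L → Fin D → ℕ → ℝ :=
  Pi.single l₀ fun i n => x i ^ n

theorem sum_prod_diracMoments [NeZero D] (l₀ : Fin L) (x : Fin D → ℝ) (n : Fin D → ℕ) :
    ∑ l, ∏ i, diracMoments l₀ x l i (n i) = ∏ i, x i ^ n i := by
  rw [Fintype.sum_eq_single l₀ fun l hl => ?_]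
  · simp [diracMoments]
  · exact Finset.prod_eq_zero (Finset.mem_univ 0) (by simp [diracMoments, hl])

theorem feasible_diracMoments [NeZero D] (d : ℕ) (l₀ : Fin L) {x : Fin D → ℝ} (hx : x ∈ cube D) :
    Feasible D d L (diracMoments l₀ x) := by
  refine ⟨fun l i => ?_, fun l i => ?_, by simpa using sum_prod_diracMoments l₀ x 0⟩
  · rcases eq_or_ne l l₀ with rfl | hl
    · simpa [diracMoments] using momentMatrix_pow_posSemidef d (x i)
    · simpa [diracMoments, hl, momentMatrix_zero] using Matrix.PosSemidef.zero
  · rcases eq_or_ne l l₀ with rfl | hl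
    · simpa [diracMoments] using locMomentMatrix_pow_posSemidef d (hx i trivial)
    · simpa [diracMoments, hl, locMomentMatrix_zero] using Matrix.PosSemidef.zero

theorem objective_diracMoments [NeZero D] (p : MvPolynomial (Fin D) ℝ) (l₀ : Fin L)
    (x : Fin D → ℝ) : objective D L p (diracMoments l₀ x) = MvPolynomial.eval x p := by
  simp only [objective, sum_prod_diracMoments, MvPolynomial.eval_eq']

theorem isLeast_minVal (p : MvPolynomial (Fin D) ℝ) :
    IsLeast ((fun x => MvPolynomial.eval x p) '' cube D) (minVal D p) :=
  ((isCompact_univ_pi fun _ => isCompact_Icc).image (MvPolynomial.continuous_eval p)).isLeast_sInf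
    (Set.Nonempty.image _ ⟨0, fun _ _ => by simp⟩)

theorem statement5_general (hD : 1 ≤ D) (hL : 1 ≤ L) (hdeg : ∀ i, p.degreeOf i ≤ 2 * d) :
    (∀ μ : Fin L → Fin D → ℕ → ℝ, Feasible D d L μ → minVal D p ≤ objective D L p μ) ∧
    (∃ μ : Fin L → Fin D → ℕ → ℝ, Feasible D d L μ ∧ objective D L p μ = minVal D p) := by
  have : NeZero D := ⟨Nat.one_le_iff_ne_zero.1 hD⟩
  obtain ⟨⟨x, hx, hxmin⟩, hlower⟩ := isLeast_minVal p
  refine ⟨fun μ hμ => hμ.le_objective hdeg fun y hy => hlower (Set.mem_image_of_mem _ hy), ?_⟩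
  exact ⟨diracMoments ⟨0, hL⟩ x, feasible_diracMoments d _ hx,
    (objective_diracMoments p _ x).trans hxmin⟩

end Reformulation

/-- Theorem 2.2 (equivalence of the reformulation): the reformulated objective over the
feasible set `F_L` is bounded below by `min_{x ∈ [-1,1]^D} p(x)`, and this value is
attained at some feasible point. -/
theorem statement5 (D d L : ℕ) (hD : 1 ≤ D) (hd : 1 ≤ d) (hL : 1 ≤ L)
    (p : MvPolynomial (Fin D) ℝ) (hdeg : p.totalDegree ≤ d) :
    (∀ μ : Fin L → Fin D → ℕ → ℝ, Feasible D d L μ → minVal D p ≤ objective D L p μ) ∧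
    (∃ μ : Fin L → Fin D → ℕ → ℝ, Feasible D d L μ ∧ objective D L p μ = minVal D p) :=
  statement5_general hD hL fun i => (p.degreeOf_le_totalDegree i).trans (by lia)
end
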